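/- There exists a partitioned balanced tournament design of side 9; that is, there exists an arrangement of the 153 distinct unordered pairs of an 18-element set V into a 9 × 17 array such that (1) every element of V is contained in precisely one cell of each column, (2) every element of V is contained in at most two cells of any row, (3) in each row, the 9 cells in the first 9 columns form a one-factor of V (a partition of V into 9 pairs), and (4) in each row, the 9 cells in the last 9 columns form a one-factor of V. -/

import Mathlib

/-- The array: entry `(a, b)` in row `i`, column `j` is the pair `{a, b}`. -/
def pbtdTable : List (List (ℕ × ℕ)) := [
  [(11, 12), (7, 9), (2, 5), (15, 16), (8, 10), (6, 13), (4, 17), (3, 14), (0, 1), (8, 17), (2, 6), (7, 10), (11, 13), (14, 16), (5, 9), (3, 15), (4, 12)],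
  [(8, 15), (1, 14), (9, 11), (4, 7), (13, 17), (0, 10), (5, 16), (6, 12), (2, 3), (7, 11), (10, 12), (4, 8), (0, 9), (1, 15), (13, 16), (5, 17), (6, 14)],
  [(0, 2), (10, 17), (3, 16), (1, 11), (6, 9), (12, 15), (8, 14), (7, 13), (4, 5), (13, 15), (1, 9), (0, 14), (6, 10), (2, 11), (3, 17), (7, 12), (8, 16)],
  [(14, 17), (2, 4), (0, 12), (5, 13), (1, 3), (8, 11), (9, 15), (10, 16), (6, 7), (5, 12), (15, 17), (3, 11), (2, 16), (0, 8), (1, 4), (9, 14), (10, 13)],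
  [(1, 10), (12, 16), (4, 6), (2, 14), (7, 15), (3, 5), (0, 13), (11, 17), (8, 9), (3, 6), (7, 14), (12, 17), (1, 5), (4, 13), (2, 10), (11, 16), (0, 15)],
  [(5, 7), (0, 3), (13, 14), (6, 8), (4, 16), (9, 17), (1, 12), (2, 15), (10, 11), (0, 4), (5, 8), (9, 16), (12, 14), (3, 7), (6, 15), (1, 13), (2, 17)],
  [(6, 16), (11, 15), (7, 8), (0, 17), (5, 14), (1, 2), (3, 10), (4, 9), (12, 13), (2, 9), (0, 16), (5, 15), (3, 8), (6, 17), (11, 14), (4, 10), (1, 7)],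
  [(3, 4), (8, 13), (1, 17), (9, 10), (2, 12), (7, 16), (6, 11), (0, 5), (14, 15), (1, 16), (4, 11), (2, 13), (7, 17), (5, 10), (8, 12), (0, 6), (3, 9)],
  [(9, 13), (5, 6), (10, 15), (3, 12), (0, 11), (4, 14), (2, 7), (1, 8), (16, 17), (10, 14), (3, 13), (1, 6), (4, 15), (9, 12), (0, 7), (2, 8), (5, 11)]]

/-- Position (row, column) of the pair `{x, y}` in the array. -/
def pbtdPosTable : List (List (ℕ × ℕ)) := [
  [(0, 0), (0, 8), (2, 0), (5, 1), (5, 9), (7, 7), (7, 15), (8, 14), (3, 13), (1, 12), (1, 5), (8, 4), (3, 2), (4, 6), (2, 11), (4, 16), (6, 10), (6, 3)],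
  [(0, 8), (0, 0), (6, 5), (3, 4), (3, 14), (4, 12), (8, 11), (6, 16), (8, 7), (2, 10), (4, 0), (2, 3), (5, 6), (5, 15), (1, 1), (1, 13), (7, 9), (7, 2)],
  [(2, 0), (6, 5), (0, 0), (1, 8), (3, 1), (0, 2), (0, 10), (8, 6), (8, 15), (6, 9), (4, 14), (2, 13), (7, 4), (7, 11), (4, 3), (5, 7), (3, 12), (5, 16)],
  [(5, 1), (3, 4), (1, 8), (0, 0), (7, 0), (4, 5), (4, 9), (5, 13), (6, 12), (7, 16), (6, 6), (3, 11), (8, 3), (8, 10), (0, 7), (0, 15), (2, 2), (2, 14)],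
  [(5, 9), (3, 14), (3, 1), (7, 0), (0, 0), (2, 8), (4, 2), (1, 3), (1, 11), (6, 7), (6, 15), (7, 10), (0, 16), (4, 13), (8, 5), (8, 12), (5, 4), (0, 6)],
  [(7, 7), (4, 12), (0, 2), (4, 5), (2, 8), (0, 0), (8, 1), (5, 0), (5, 10), (0, 14), (7, 13), (8, 16), (3, 9), (3, 3), (6, 4), (6, 11), (1, 6), (1, 15)],
  [(7, 15), (8, 11), (0, 10), (4, 9), (4, 2), (8, 1), (0, 0), (3, 8), (5, 3), (2, 4), (2, 12), (7, 6), (1, 7), (0, 5), (1, 16), (5, 14), (6, 0), (6, 13)],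
  [(8, 14), (6, 16), (8, 6), (5, 13), (1, 3), (5, 0), (3, 8), (0, 0), (6, 2), (0, 1), (0, 11), (1, 9), (2, 15), (2, 7), (4, 10), (4, 4), (7, 5), (7, 12)],
  [(3, 13), (8, 7), (8, 15), (6, 12), (1, 11), (5, 10), (5, 3), (6, 2), (0, 0), (4, 8), (0, 4), (3, 5), (7, 14), (7, 1), (2, 6), (1, 0), (2, 16), (0, 9)],
  [(1, 12), (2, 10), (6, 9), (7, 16), (6, 7), (0, 14), (2, 4), (0, 1), (4, 8), (0, 0), (7, 3), (1, 2), (8, 13), (8, 0), (3, 15), (3, 6), (5, 11), (5, 5)],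
  [(1, 5), (4, 0), (4, 14), (6, 6), (6, 15), (7, 13), (2, 12), (0, 11), (0, 4), (7, 3), (0, 0), (5, 8), (1, 10), (3, 16), (8, 9), (8, 2), (3, 7), (2, 1)],
  [(8, 4), (2, 3), (2, 13), (3, 11), (7, 10), (8, 16), (7, 6), (1, 9), (3, 5), (1, 2), (5, 8), (0, 0), (0, 0), (0, 12), (6, 14), (6, 1), (4, 15), (4, 7)],
  [(3, 2), (5, 6), (7, 4), (8, 3), (0, 16), (3, 9), (1, 7), (2, 15), (7, 14), (8, 13), (1, 10), (0, 0), (0, 0), (6, 8), (5, 12), (2, 5), (4, 1), (4, 11)],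
  [(4, 6), (5, 15), (7, 11), (8, 10), (4, 13), (3, 3), (0, 5), (2, 7), (7, 1), (8, 0), (3, 16), (0, 12), (6, 8), (0, 0), (5, 2), (2, 9), (1, 14), (1, 4)],
  [(2, 11), (1, 1), (4, 3), (0, 7), (8, 5), (6, 4), (1, 16), (4, 10), (2, 6), (3, 15), (8, 9), (6, 14), (5, 12), (5, 2), (0, 0), (7, 8), (0, 13), (3, 0)],
  [(4, 16), (1, 13), (5, 7), (0, 15), (8, 12), (6, 11), (5, 14), (4, 4), (1, 0), (3, 6), (8, 2), (6, 1), (2, 5), (2, 9), (7, 8), (0, 0), (0, 3), (3, 10)],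
  [(6, 10), (7, 9), (3, 12), (2, 2), (5, 4), (1, 6), (6, 0), (7, 5), (2, 16), (5, 11), (3, 7), (4, 15), (4, 1), (1, 14), (0, 13), (0, 3), (0, 0), (8, 8)],
  [(6, 3), (7, 2), (5, 16), (2, 14), (0, 6), (1, 15), (6, 13), (7, 12), (0, 9), (5, 5), (2, 1), (4, 7), (4, 11), (1, 4), (3, 0), (3, 10), (8, 8), (0, 0)]]

def pbtdFst (i : Fin 9) (j : Fin 17) : Fin 18 :=
  Fin.ofNat 18 ((pbtdTable.getD i.val []).getD j.val (0, 0)).1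

def pbtdSnd (i : Fin 9) (j : Fin 17) : Fin 18 :=
  Fin.ofNat 18 ((pbtdTable.getD i.val []).getD j.val (0, 0)).2

def pbtdRow (x y : Fin 18) : Fin 9 :=
  Fin.ofNat 9 ((pbtdPosTable.getD x.val []).getD y.val (0, 0)).1

def pbtdCol (x y : Fin 18) : Fin 17 :=
  Fin.ofNat 17 ((pbtdPosTable.getD x.val []).getD y.val (0, 0)).2

theorem pbtd_pos_spec : ∀ x y : Fin 18, x ≠ y →
    (pbtdFst (pbtdRow x y) (pbtdCol x y) = x ∧ pbtdSnd (pbtdRow x y) (pbtdCol x y) = y) ∨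
    (pbtdFst (pbtdRow x y) (pbtdCol x y) = y ∧ pbtdSnd (pbtdRow x y) (pbtdCol x y) = x) := by
  decide +kernel

theorem pbtd_pos_inv : ∀ (i : Fin 9) (j : Fin 17),
    (pbtdRow (pbtdFst i j) (pbtdSnd i j) = i ∧ pbtdCol (pbtdFst i j) (pbtdSnd i j) = j) ∧
    (pbtdRow (pbtdSnd i j) (pbtdFst i j) = i ∧ pbtdCol (pbtdSnd i j) (pbtdFst i j) = j) := by
  decide +kernel

theorem pbtd_column : ∀ (j : Fin 17) (x : Fin 18), ∃ i : Fin 9,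
    (x = pbtdFst i j ∨ x = pbtdSnd i j) ∧
    ∀ i' : Fin 9, (x = pbtdFst i' j ∨ x = pbtdSnd i' j) → i' = i := by
  decide +kernel

theorem pbtd_left : ∀ (i : Fin 9) (x : Fin 18), ∃ j : Fin 17,
    (j.val < 9 ∧ (x = pbtdFst i j ∨ x = pbtdSnd i j)) ∧
    ∀ j' : Fin 17, (j'.val < 9 ∧ (x = pbtdFst i j' ∨ x = pbtdSnd i j')) → j' = j := by
  decide +kernel

theorem pbtd_right : ∀ (i : Fin 9) (x : Fin 18), ∃ j : Fin 17,
    (8 ≤ j.val ∧ (x = pbtdFst i j ∨ x = pbtdSnd i j)) ∧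
    ∀ j' : Fin 17, (8 ≤ j'.val ∧ (x = pbtdFst i j' ∨ x = pbtdSnd i j')) → j' = j := by
  decide +kernel

/-- **There exists a partitioned balanced tournament design of side 9**:
an arrangement `T` of the 153 distinct unordered pairs of the 18-element set
`Fin 18` into a 9 × 17 array such that
(1) every element is contained in precisely one cell of each column,
(2) every element is contained in at most two cells of any row,
(3) in each row the 9 cells in the first 9 columns form a one-factor, and
(4) in each row the 9 cells in the last 9 columns form a one-factor. -/
theorem exists_pbtd_nine :
    ∃ T : Fin 9 → Fin 17 → Sym2 (Fin 18),
      -- the 153 distinct unordered pairs each occur in exactly one cell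
      (∀ x y : Fin 18, x ≠ y → ∃! p : Fin 9 × Fin 17, T p.1 p.2 = s(x, y)) ∧
      -- (1) every element lies in precisely one cell of each column
      (∀ j : Fin 17, ∀ x : Fin 18, ∃! i : Fin 9, x ∈ T i j) ∧
      -- (2) every element lies in at most two cells of any row
      (∀ i : Fin 9, ∀ x : Fin 18,
        (Finset.univ.filter fun j : Fin 17 => x ∈ T i j).card ≤ 2) ∧
      -- (3) each row contains a one-factor in the first 9 columns
      (∀ i : Fin 9, ∀ x : Fin 18, ∃! j : Fin 17, j.val < 9 ∧ x ∈ T i j) ∧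
      -- (4) each row contains a one-factor in the last 9 columns
      (∀ i : Fin 9, ∀ x : Fin 18, ∃! j : Fin 17, 8 ≤ j.val ∧ x ∈ T i j) := by
  refine ⟨fun i j => s(pbtdFst i j, pbtdSnd i j), ?_, ?_, ?_, ?_, ?_⟩
  · intro x y hxy
    refine ⟨(pbtdRow x y, pbtdCol x y), ?_, ?_⟩
    · simpa only [Sym2.eq_iff] using pbtd_pos_spec x y hxy
    · rintro ⟨i, j⟩ h
      have hinv := pbtd_pos_inv i j
      simp only [Sym2.eq_iff] at h
      rcases h with ⟨h1, h2⟩ | ⟨h1, h2⟩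
      · rw [h1, h2] at hinv
        exact Prod.ext hinv.1.1.symm hinv.1.2.symm
      · rw [h1, h2] at hinv
        exact Prod.ext hinv.2.1.symm hinv.2.2.symm
  · intro j x
    simp only [Sym2.mem_iff]
    exact pbtd_column j x
  · intro i x
    obtain ⟨a, -, ha⟩ := pbtd_left i x
    obtain ⟨b, -, hb⟩ := pbtd_right i x
    refine (Finset.card_le_card (t := {a, b}) ?_).trans Finset.card_le_two
    intro j hj
    simp only [Finset.mem_filter, Finset.mem_univ, true_and, Sym2.mem_iff] at hj
    simp only [Finset.mem_insert, Finset.mem_singleton]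
    rcases Nat.lt_or_ge j.val 9 with h | h
    · exact Or.inl (ha j ⟨h, hj⟩)
    · exact Or.inr (hb j ⟨by omega, hj⟩)
  · intro i x
    simp only [Sym2.mem_iff]
    exact pbtd_left i x
  · intro i x
    simp only [Sym2.mem_iff]
    exact pbtd_right i x
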